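/- Let rU be a function on words such that for every upper prime U, rU(U) is an upper prime with rU(U) ∼ U, and rU(U) = rU(U′) whenever U and U′ are upper primes with U ∼ U′; let rD be a function with the analogous properties for lower primes. Define S''' = {rU(U)·rD(D) − rD(D)·rU(U) : U an upper prime, D a lower prime}. Then S''' ⊆ S, the two-sided ideal of 𝒜 generated by S''' equals 𝒥, and for every proper subset T ⊊ S''', the two-sided ideal of 𝒜 generated by T is not equal to 𝒥. -/

import Mathlib

/-!
Since `𝒥` is generated by differences of words, `X ∼ Y` forces `X` and `Y` to be identified by every
monoid congruence on words that identifies `FG` with `GF` for balanced `F`, `G`: map the free algebra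
to the monoid algebra of the quotient (`con_of_mem_span`). Both halves of the theorem are obtained by
choosing the congruence well.

*Generation.* Let `I` be the ideal generated by `S3`. By strong induction on `|F| + |G|`, balanced
words `F`, `G` commute modulo `I` (`commute_of_balanced`). If one of them is empty or a product of
shorter balanced words, the induction hypothesis applies directly. Otherwise both are primes, hence
upper or lower.
For two primes on the same side, `F = aAb` and `G = aBb` with `A`, `B` balanced, and
`aA(ba)Bb = a(ba)ABb = a(ba)BAb = aB(ba)Ab` uses shorter commutations only. For an upper prime `U`
and a lower prime `D`, the relations `U ∼ rU(U)` and `D ∼ rD(D)` already hold modulo `I`, since a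
relation between words of length `< n` comes from swaps of length `< n`
(`eq_of_wEquiv_of_short`); and `rU(U)`, `rD(D)` commute modulo `I` by definition.

*Minimality.* Fix representatives `U`, `D` and let `C` be the set of words `XY` with `X ∼ U`,
`Y ∼ D`. Then `X` is an upper and `Y` a lower prime (`SPrime.of_wEquiv`), so a balanced factor of
`XY` lies in `X`, lies in `Y`, or is all of `XY` (`balanced_factor_cases`). Hence membership in `C` is
unaffected by every swap of representatives `U₁`, `D₁` other than the pair `U`, `D`, whereas
`UD ∈ C` and `DU ∉ C`. The syntactic congruence of `C` then separates `UD - DU` from the ideal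
generated by the remaining elements of `S3`.
-/

/-- A word is a finite sequence of letters; the letter `L` is `false`, the letter `R` is `true`. -/
abbrev Word := List Bool

/-- A word is balanced if it contains equally many `L`s and `R`s. -/
def BalancedWord (w : Word) : Prop := w.count true = w.count false

/-- The element of the free `ℂ`-algebra on two generators corresponding to a word. -/
noncomputable def toA (w : Word) : FreeAlgebra ℂ Bool :=
  (w.map (FreeAlgebra.ι ℂ)).prod

/-- The set `S = {FG - GF : F, G nonempty balanced words}`. -/
def Sset : Set (FreeAlgebra ℂ Bool) :=
  {x | ∃ F G : Word, F ≠ [] ∧ G ≠ [] ∧ BalancedWord F ∧ BalancedWord G ∧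
    x = toA F * toA G - toA G * toA F}

/-- The two-sided ideal `𝒥` generated by `S`. -/
noncomputable def Jideal : TwoSidedIdeal (FreeAlgebra ℂ Bool) := TwoSidedIdeal.span Sset

/-- `X ∼ Y` iff `X - Y ∈ 𝒥`. -/
def WEquiv (X Y : Word) : Prop := toA X - toA Y ∈ Jideal

/-- Words `X` and `Y` are related by a swap of type `(F, G)`. -/
def SwapOfType (F G X Y : Word) : Prop :=
  ∃ W₁ W₂ : Word,
    (X = W₁ ++ F ++ G ++ W₂ ∧ Y = W₁ ++ G ++ F ++ W₂) ∨
    (X = W₁ ++ G ++ F ++ W₂ ∧ Y = W₁ ++ F ++ G ++ W₂)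

/-- Words `X` and `Y` are related by a swap. -/
def RelatedBySwap (X Y : Word) : Prop :=
  ∃ F G : Word, F ≠ [] ∧ G ≠ [] ∧ BalancedWord F ∧ BalancedWord G ∧ SwapOfType F G X Y

/-- The `k`-th elevation of a word: number of `R`s minus number of `L`s among the
first `k` letters. -/
def elev (w : Word) (k : ℕ) : ℤ :=
  ((w.take k).count true : ℤ) - ((w.take k).count false : ℤ)

/-- The elevation multiset `E(W) = {e_k(W) : 0 ≤ k ≤ n}`. -/
def elevMultiset (w : Word) : Multiset ℤ :=
  (Multiset.range (w.length + 1)).map (elev w)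

/-- A word is prime if it is nonempty, balanced, and cannot be written as the
product of two nonempty balanced words. -/
def IsPrimeWord (w : Word) : Prop :=
  w ≠ [] ∧ BalancedWord w ∧
    ¬ ∃ u v : Word, u ≠ [] ∧ v ≠ [] ∧ BalancedWord u ∧ BalancedWord v ∧ w = u ++ v

/-- An upper prime: a prime word with `e_k > 0` for `1 ≤ k ≤ n - 1`. -/
def UpperPrime (w : Word) : Prop :=
  IsPrimeWord w ∧ ∀ k, 1 ≤ k → k ≤ w.length - 1 → 0 < elev w k

/-- A lower prime: a prime word with `e_k < 0` for `1 ≤ k ≤ n - 1`. -/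
def LowerPrime (w : Word) : Prop :=
  IsPrimeWord w ∧ ∀ k, 1 ≤ k → k ≤ w.length - 1 → elev w k < 0

/-- A word is reduced if it contains no contiguous subword `UD` with `U` an
upper prime and `D` a lower prime. -/
def Reduced (W : Word) : Prop :=
  ¬ ∃ U D W₁ W₂ : Word, UpperPrime U ∧ LowerPrime D ∧ W = W₁ ++ U ++ D ++ W₂

/-- Alphabetical (lexicographic) order on words, with `L < R`. -/
def WordLt (X Y : Word) : Prop := List.Lex (· < ·) X Y

/-! ### Words in the algebra -/

theorem toA_append (u v : Word) : toA (u ++ v) = toA u * toA v := by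
  simp [toA]

theorem toA_nil : toA [] = 1 := by
  simp [toA]

/-- If an ideal is generated by differences of words congruent under `c`, then any difference of
words in the ideal is one of congruent words: the ideal lies in the kernel of the map to the monoid
algebra of the quotient by `c`. -/
theorem con_of_mem_span (c : Con (FreeMonoid Bool)) (T : Set (FreeAlgebra ℂ Bool))
    (hT : ∀ x ∈ T, ∃ X Y : Word,
      c (FreeMonoid.ofList X) (FreeMonoid.ofList Y) ∧ x = toA X - toA Y)
    {X Y : Word} (h : toA X - toA Y ∈ TwoSidedIdeal.span T) :
    c (FreeMonoid.ofList X) (FreeMonoid.ofList Y) := by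
  let φ : FreeAlgebra ℂ Bool →ₐ[ℂ] MonoidAlgebra ℂ c.Quotient :=
    FreeAlgebra.lift ℂ (fun b => MonoidAlgebra.of ℂ _ (c.mk' (FreeMonoid.of b)))
  have hφ : ∀ w : Word, φ (toA w) = MonoidAlgebra.of ℂ _ (c.mk' (FreeMonoid.ofList w)) := by
    intro w
    induction w with
    | nil =>
      rw [toA_nil, map_one, FreeMonoid.ofList_nil, map_one, map_one]
    | cons a t ih =>
      have h1 : toA (a :: t) = FreeAlgebra.ι ℂ a * toA t := by simp [toA]
      rw [h1, map_mul, ih, FreeMonoid.ofList_cons, map_mul, map_mul]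
      simp [φ]
  have hle : TwoSidedIdeal.span T ≤ TwoSidedIdeal.ker φ := by
    rw [TwoSidedIdeal.span_le]
    intro x hx
    obtain ⟨A, B, hc, rfl⟩ := hT x hx
    have hq : c.mk' (FreeMonoid.ofList A) = c.mk' (FreeMonoid.ofList B) := (Con.eq c).2 hc
    rw [SetLike.mem_coe, TwoSidedIdeal.mem_ker, map_sub, hφ, hφ, hq, sub_self]
  have h0 := hle h
  rw [TwoSidedIdeal.mem_ker, map_sub, hφ, hφ, sub_eq_zero] at h0
  exact (Con.eq c).1 (MonoidAlgebra.of_injective h0)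

/-! ### Heights and primes -/

/-- The final elevation of a word: number of `R`s minus number of `L`s. -/
def ht (w : Word) : ℤ := (w.count true : ℤ) - (w.count false : ℤ)

@[simp] theorem ht_nil : ht [] = 0 := by simp [ht]

@[simp] theorem ht_append (u v : Word) : ht (u ++ v) = ht u + ht v := by
  simp [ht]; ring

@[simp] theorem ht_cons (a : Bool) (v : Word) : ht (a :: v) = (if a then 1 else -1) + ht v := by
  cases a <;> simp [ht] <;> ring

theorem balanced_iff (w : Word) : BalancedWord w ↔ ht w = 0 := by
  unfold BalancedWord ht; omega

/-- Primes on the side given by the sign `s`: nonempty balanced words all of whose proper nonempty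
prefixes have a final elevation of the sign of `s`. The value `s = 1` gives the upper primes and
`s = -1` the lower primes. -/
def SPrime (s : ℤ) (w : Word) : Prop :=
  w ≠ [] ∧ ht w = 0 ∧ ∀ u v : Word, u ≠ [] → v ≠ [] → w = u ++ v → 0 < s * ht u

theorem elev_append (u v : Word) : elev (u ++ v) u.length = ht u := by
  simp [elev, ht]

theorem sPrime_iff (s : ℤ) (w : Word) :
    SPrime s w ↔
      IsPrimeWord w ∧ ∀ k, 1 ≤ k → k ≤ w.length - 1 → 0 < s * elev w k := by
  constructor
  · rintro ⟨h1, h2, h3⟩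
    refine ⟨⟨h1, (balanced_iff w).2 h2, ?_⟩, ?_⟩
    · rintro ⟨u, v, hu, hv, bu, -, e⟩
      have := h3 u v hu hv e
      rw [(balanced_iff u).1 bu] at this
      simp at this
    · intro k hk1 hk2
      refine h3 (w.take k) (w.drop k) ?_ ?_ (List.take_append_drop k w).symm
      · intro h
        have := congrArg List.length h
        simp at this
        rcases this with h | h
        · omega
        · exact h1 h
      · intro h
        have := congrArg List.length h
        simp at this
        have := List.length_pos_iff.2 h1
        omega
  · rintro ⟨⟨h1, h2, -⟩, h4⟩
    refine ⟨h1, (balanced_iff w).1 h2, ?_⟩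
    rintro u v hu hv rfl
    rw [← elev_append u v]
    have := List.length_pos_iff.2 hu
    have := List.length_pos_iff.2 hv
    exact h4 _ (by omega) (by simp; omega)

theorem upperPrime_iff (w : Word) : UpperPrime w ↔ SPrime 1 w := by
  rw [sPrime_iff]; simp [UpperPrime]

theorem lowerPrime_iff (w : Word) : LowerPrime w ↔ SPrime (-1) w := by
  rw [sPrime_iff]; simp [LowerPrime]

/-- A balanced word that is not a product of two shorter ones stays on the side of its first
letter, because the elevation changes by one at each letter and cannot return to `0`. -/
theorem empty_or_prime_or_split (w : Word) (hw : ht w = 0) :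
    w = [] ∨ SPrime 1 w ∨ SPrime (-1) w ∨
      ∃ u v : Word, u ≠ [] ∧ v ≠ [] ∧ ht u = 0 ∧ ht v = 0 ∧ w = u ++ v := by
  by_cases hs : ∃ u v : Word, u ≠ [] ∧ v ≠ [] ∧ ht u = 0 ∧ ht v = 0 ∧ w = u ++ v
  · exact Or.inr (Or.inr (Or.inr hs))
  rcases w with _ | ⟨a, t⟩
  · exact Or.inl rfl
  have key : SPrime (ht [a]) (a :: t) := by
    refine ⟨by simp, hw, fun u => ?_⟩
    induction u using List.reverseRecOn with
    | nil => intro v hu; exact absurd rfl hu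
    | append_singleton u b ih =>
      intro v _ hv e
      have hne : ht (u ++ [b]) ≠ 0 := by
        intro h0
        refine hs ⟨u ++ [b], v, by simp, hv, h0, ?_, e⟩
        rw [e, ht_append, h0] at hw
        simpa using hw
      rcases u with _ | ⟨c, u⟩
      · simp at e
        rw [← e.1]
        cases a <;> simp
      · have := ih (b :: v) (by simp) (by simp) (by simpa using e)
        simp only [ht_append, ht_cons, ht_nil] at this hne ⊢
        cases a <;> cases b <;> simp at this hne ⊢ <;> omega
  cases a
  · exact Or.inr (Or.inr (Or.inl (by simpa using key)))
  · exact Or.inr (Or.inl (by simpa using key))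

/-- An upper prime has the form `RAL` and a lower prime the form `LAR`, with `A` balanced. -/
theorem SPrime.exists_eq {s : Bool} {w : Word} (h : SPrime (if s then 1 else -1) w) :
    ∃ A : Word, ht A = 0 ∧ w = s :: (A ++ [!s]) := by
  obtain ⟨h1, h2, h3⟩ := h
  rcases w with _ | ⟨a, t⟩
  · exact absurd rfl h1
  rcases List.eq_nil_or_concat t with rfl | ⟨A, b, rfl⟩
  · cases a <;> simp at h2
  have e1 := h3 [a] (A ++ [b]) (by simp) (by simp) (by simp)
  have e2 := h3 (a :: A) [b] (by simp) (by simp) (by simp)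
  simp only [ht_cons, ht_nil] at e1 e2 h2
  refine ⟨A, ?_, ?_⟩ <;> cases a <;> cases b <;> cases s <;> simp at e1 e2 h2 ⊢ <;> omega

/-! ### Swaps -/

/-- Exchanging adjacent nonempty balanced factors keeps a word prime on the same side. -/
theorem SPrime.swap {s : ℤ} {F G W₁ W₂ : Word} (hF : F ≠ []) (hG : G ≠ []) (bF : ht F = 0)
    (bG : ht G = 0) (h : SPrime s (W₁ ++ F ++ G ++ W₂)) : SPrime s (W₁ ++ G ++ F ++ W₂) := by
  obtain ⟨-, h2, h3⟩ := h
  -- An empty `W₁` or `W₂` would put the point between `F` and `G` at elevation `0`.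
  have hW1 : W₁ ≠ [] := by
    rintro rfl
    have := h3 F (G ++ W₂) hF (by simp [hG]) (by simp)
    simp [bF] at this
  have hW2 : W₂ ≠ [] := by
    rintro rfl
    have := h3 (W₁ ++ F) G (by simp [hF]) hG (by simp)
    simp [bF, bG] at this h2
    simp [h2] at this
  refine ⟨by simp [hF], by simpa [bF, bG] using h2, ?_⟩
  intro u v hu hv e
  simp only [List.append_assoc] at e
  rcases List.append_eq_append_iff.1 e with ⟨u1, rfl, e1⟩ | ⟨z, rfl, rfl⟩
  · rcases List.append_eq_append_iff.1 e1 with ⟨u2, rfl, e2⟩ | ⟨z, rfl, rfl⟩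
    · rcases List.append_eq_append_iff.1 e2 with ⟨u3, rfl, e3⟩ | ⟨z, rfl, rfl⟩
      · have := h3 (W₁ ++ (F ++ (G ++ u3))) v (by simp [hW1]) hv (by simp [e3])
        simpa [bF, bG] using this
      · have := h3 (W₁ ++ u2) (z ++ G ++ W₂) (by simp [hW1]) (by simp [hW2]) (by simp)
        simpa [bG] using this
    · have := h3 (W₁ ++ F ++ u1) (z ++ W₂) (by simp [hW1]) (by simp [hW2]) (by simp)
      simpa [bF] using this
  · exact h3 u (z ++ F ++ G ++ W₂) hu (by simp [hF]) (by simp)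

/-- The syntactic congruence of a set `C` of words: two words are congruent if replacing one by the
other in any context does not affect membership in `C`. -/
def synCon (C : Word → Prop) : Con (FreeMonoid Bool) where
  r X Y := ∀ W₁ W₂ : Word, C (W₁ ++ X.toList ++ W₂) ↔ C (W₁ ++ Y.toList ++ W₂)
  iseqv := ⟨fun _ _ _ => Iff.rfl, fun h W₁ W₂ => (h W₁ W₂).symm,
    fun h h' W₁ W₂ => (h W₁ W₂).trans (h' W₁ W₂)⟩
  mul' := by
    intro a b c d h h' W₁ W₂
    have e1 := h W₁ (c.toList ++ W₂)
    have e2 := h' (W₁ ++ b.toList) W₂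
    simp only [FreeMonoid.toList_mul, List.append_assoc] at e1 e2 ⊢
    exact e1.trans e2

theorem mem_iff_of_synCon {C : Word → Prop} {X Y : Word}
    (h : synCon C (FreeMonoid.ofList X) (FreeMonoid.ofList Y)) : C X ↔ C Y := by
  simpa using h [] []

theorem con_of_wEquiv (c : Con (FreeMonoid Bool))
    (hc : ∀ F G : Word, F ≠ [] → G ≠ [] → ht F = 0 → ht G = 0 →
      c (FreeMonoid.ofList (F ++ G)) (FreeMonoid.ofList (G ++ F)))
    {X Y : Word} (h : WEquiv X Y) : c (FreeMonoid.ofList X) (FreeMonoid.ofList Y) := by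
  refine con_of_mem_span c Sset ?_ h
  rintro x ⟨F, G, hF, hG, bF, bG, rfl⟩
  exact ⟨F ++ G, G ++ F, hc F G hF hG ((balanced_iff F).1 bF) ((balanced_iff G).1 bG),
    by simp [toA_append]⟩

theorem SPrime.of_wEquiv {s : ℤ} {X Y : Word} (h : WEquiv X Y) (hY : SPrime s Y) :
    SPrime s X := by
  refine (mem_iff_of_synCon (C := SPrime s) (con_of_wEquiv _ ?_ h)).2 hY
  intro F G hF hG bF bG W₁ W₂
  constructor
  · intro h'
    simpa using SPrime.swap (W₁ := W₁) (W₂ := W₂) hF hG bF bG (by simpa using h')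
  · intro h'
    simpa using SPrime.swap (W₁ := W₁) (W₂ := W₂) hG hF bG bF (by simpa using h')

theorem WEquiv.refl (X : Word) : WEquiv X X := by
  simp [WEquiv, Jideal.zero_mem]

theorem WEquiv.symm {X Y : Word} (h : WEquiv X Y) : WEquiv Y X := by
  have := Jideal.neg_mem h
  rwa [neg_sub] at this

theorem WEquiv.trans {X Y Z : Word} (h : WEquiv X Y) (h' : WEquiv Y Z) : WEquiv X Z := by
  have := Jideal.add_mem h h'
  rwa [sub_add_sub_cancel] at this

theorem wEquiv_swap {F G : Word} (hF : F ≠ []) (hG : G ≠ []) (bF : ht F = 0) (bG : ht G = 0)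
    (W₁ W₂ : Word) : WEquiv (W₁ ++ (F ++ G) ++ W₂) (W₁ ++ (G ++ F) ++ W₂) := by
  have h : toA F * toA G - toA G * toA F ∈ Jideal :=
    TwoSidedIdeal.subset_span
      ⟨F, G, hF, hG, (balanced_iff F).2 bF, (balanced_iff G).2 bG, rfl⟩
  have h2 := Jideal.mul_mem_right _ (toA W₂) (Jideal.mul_mem_left (toA W₁) _ h)
  unfold WEquiv
  convert h2 using 1
  simp only [toA_append]
  noncomm_ring

/-! ### Generation -/

/-- A relation `X ∼ Y` between words of length less than `n` holds under any multiplicative map for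
which swaps of total length less than `n` hold. -/
theorem eq_of_wEquiv_of_short {Q : Type*} [Monoid Q] (f : Word → Q)
    (fmul : ∀ u v, f (u ++ v) = f u * f v) (n : ℕ)
    (hf : ∀ F G : Word, ht F = 0 → ht G = 0 → F.length + G.length < n → Commute (f F) (f G))
    {X Y : Word} (h : WEquiv X Y) (hX : X.length < n) : f X = f Y := by
  -- Equality of lengths is part of the congruence, so that the bound can be transported along it.
  let c : Con (FreeMonoid Bool) :=
    { r := fun X Y => X.toList.length = Y.toList.length ∧
        (X.toList.length < n → f X.toList = f Y.toList)
      iseqv := ⟨fun _ => ⟨rfl, fun _ => rfl⟩,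
        fun h => ⟨h.1.symm, fun hl => (h.2 (h.1 ▸ hl)).symm⟩,
        fun h h' => ⟨h.1.trans h'.1, fun hl => (h.2 hl).trans (h'.2 (h.1 ▸ hl))⟩⟩
      mul' := by
        intro a b c d h h'
        simp only [FreeMonoid.toList_mul, List.length_append, fmul]
        refine ⟨by rw [h.1, h'.1], fun hl => ?_⟩
        rw [h.2 (by omega), h'.2 (by omega)] }
  have hc : c (FreeMonoid.ofList X) (FreeMonoid.ofList Y) := by
    refine con_of_wEquiv c ?_ h
    intro F G _ _ bF bG
    refine ⟨?_, fun hl => ?_⟩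
    · simp [add_comm]
    · simp only [FreeMonoid.toList_ofList, List.length_append] at hl ⊢
      rw [fmul, fmul]
      exact hf F G bF bG hl
  exact hc.2 hX

/-- Under a multiplicative map for which the chosen representatives of upper primes commute with
those of lower primes, all balanced words commute. -/
theorem commute_of_balanced {Q : Type*} [Monoid Q] (f : Word → Q) (f1 : f [] = 1)
    (fmul : ∀ u v, f (u ++ v) = f u * f v) (rU rD : Word → Word)
    (hU : ∀ U, SPrime 1 U → WEquiv (rU U) U) (hD : ∀ D, SPrime (-1) D → WEquiv (rD D) D)
    (hUD : ∀ U D, SPrime 1 U → SPrime (-1) D → Commute (f (rU U)) (f (rD D))) :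
    ∀ (n : ℕ) (F G : Word), ht F = 0 → ht G = 0 → F.length + G.length = n →
      Commute (f F) (f G) := by
  intro n
  induction n using Nat.strong_induction_on with
  | _ n IH =>
  have IH : ∀ F G : Word, ht F = 0 → ht G = 0 → F.length + G.length < n →
      Commute (f F) (f G) := fun F G hF hG hl => IH _ hl F G hF hG rfl
  have opp : ∀ F G : Word, SPrime 1 F → SPrime (-1) G → F.length + G.length = n →
      Commute (f F) (f G) := by
    intro F G hF hG hl
    have := List.length_pos_iff.2 hF.1
    have := List.length_pos_iff.2 hG.1
    rw [eq_of_wEquiv_of_short f fmul n IH (hU F hF).symm (by omega),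
      eq_of_wEquiv_of_short f fmul n IH (hD G hG).symm (by omega)]
    exact hUD F G hF hG
  have same : ∀ (s : Bool) (F G : Word), SPrime (if s then 1 else -1) F →
      SPrime (if s then 1 else -1) G → F.length + G.length = n → Commute (f F) (f G) := by
    intro s F G hF hG hl
    obtain ⟨A, bA, rfl⟩ := hF.exists_eq
    obtain ⟨B, bB, rfl⟩ := hG.exists_eq
    have hm : ht [!s, s] = 0 := by cases s <;> simp
    simp only [List.length_cons, List.length_append, List.length_nil] at hl
    have c1 := (IH A [!s, s] bA hm (by simp; omega)).eq
    have c2 := (IH A B bA bB (by omega)).eq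
    have c3 := (IH B [!s, s] bB hm (by simp; omega)).eq
    have eq : ∀ A B : Word, f (s :: (A ++ [!s])) * f (s :: (B ++ [!s])) =
        f [s] * (f A * f [!s, s]) * f B * f [!s] := by
      intro A B
      rw [← fmul, ← fmul, ← fmul, ← fmul, ← fmul]
      simp
    rw [Commute, SemiconjBy, eq, eq, c1, c3]
    simp only [mul_assoc]
    rw [← mul_assoc (f A), c2, mul_assoc]
  intro F G bF bG hl
  rcases empty_or_prime_or_split F bF with rfl | hF | hF | ⟨u, v, hu, hv, bu, bv, rfl⟩
  · rw [f1]; exact Commute.one_left _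
  · rcases empty_or_prime_or_split G bG with rfl | hG | hG | ⟨u, v, hu, hv, bu, bv, rfl⟩
    · rw [f1]; exact Commute.one_right _
    · exact same true F G (by simpa using hF) (by simpa using hG) hl
    · exact opp F G hF hG hl
    · rw [List.length_append] at hl
      have := List.length_pos_iff.2 hu
      have := List.length_pos_iff.2 hv
      rw [fmul]
      exact (IH F u bF bu (by omega)).mul_right (IH F v bF bv (by omega))
  · rcases empty_or_prime_or_split G bG with rfl | hG | hG | ⟨u, v, hu, hv, bu, bv, rfl⟩
    · rw [f1]; exact Commute.one_right _
    · exact (opp G F hG hF (by omega)).symm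
    · exact same false F G (by simpa using hF) (by simpa using hG) hl
    · rw [List.length_append] at hl
      have := List.length_pos_iff.2 hu
      have := List.length_pos_iff.2 hv
      rw [fmul]
      exact (IH F u bF bu (by omega)).mul_right (IH F v bF bv (by omega))
  · rw [List.length_append] at hl
    have := List.length_pos_iff.2 hu
    have := List.length_pos_iff.2 hv
    rw [fmul]
    exact (IH u G bu bG (by omega)).mul_left (IH v G bv bG (by omega))

/-! ### Minimality -/

/-- A balanced factor `V` of `XY`, with `X` an upper and `Y` a lower prime, lies in `Y`, lies in `X`,
or is all of `XY`: a factor crossing the boundary starts at elevation at least `0` and ends at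
elevation at most `0`. -/
theorem balanced_factor_cases {X Y V W₁ W₂ : Word} (hX : SPrime 1 X) (hY : SPrime (-1) Y)
    (hV : ht V = 0) (e : W₁ ++ V ++ W₂ = X ++ Y) :
    (∃ Z, W₁ = X ++ Z ∧ Y = Z ++ V ++ W₂) ∨ (∃ Z, X = W₁ ++ V ++ Z ∧ W₂ = Z ++ Y) ∨
      (W₁ = [] ∧ W₂ = [] ∧ V = X ++ Y) := by
  rw [List.append_assoc] at e
  rcases List.append_eq_append_iff.1 e with ⟨Z, rfl, e1⟩ | ⟨Z, rfl, rfl⟩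
  swap
  · exact Or.inl ⟨Z, rfl, by simp⟩
  rcases List.append_eq_append_iff.1 e1 with ⟨Z', rfl, e2⟩ | ⟨Z', rfl, rfl⟩
  · exact Or.inr (Or.inl ⟨Z', by simp, e2⟩)
  rcases eq_or_ne Z [] with rfl | hZ
  · exact Or.inl ⟨[], by simp, by simp⟩
  rcases eq_or_ne Z' [] with rfl | hZ'
  · exact Or.inr (Or.inl ⟨[], by simp, by simp⟩)
  refine Or.inr (Or.inr ?_)
  have x2 := hX.2.1
  have y2 := hY.2.1
  rw [ht_append] at hV x2 y2
  have hY' : ht Z' ≤ 0 := by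
    rcases eq_or_ne W₂ [] with rfl | h
    · simp at y2; omega
    · have := hY.2.2 Z' W₂ hZ' h rfl
      omega
  have h1 : W₁ = [] := by
    by_contra h
    have := hX.2.2 W₁ Z h hZ rfl
    omega
  subst h1
  have h2 : W₂ = [] := by
    by_contra h
    have := hY.2.2 Z' W₂ hZ' h rfl
    simp at x2
    omega
  subst h2
  simp

theorem sPrime_append_inj {s s' : ℤ} {X Y X' Y' : Word} (hX : SPrime s X) (hX' : SPrime s' X')
    (e : X ++ Y = X' ++ Y') : X = X' ∧ Y = Y' := by
  rcases List.append_eq_append_iff.1 e with ⟨Z, rfl, rfl⟩ | ⟨Z, rfl, rfl⟩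
  · rcases eq_or_ne Z [] with rfl | hZ
    · simp
    · have := hX'.2.2 X Z hX.1 hZ rfl
      simp [hX.2.1] at this
  · rcases eq_or_ne Z [] with rfl | hZ
    · simp
    · have := hX.2.2 X' Z hX'.1 hZ rfl
      simp [hX'.2.1] at this

theorem lower_append_ne_upper_append {X Y U D : Word} (hX : SPrime 1 X) (hD : SPrime (-1) D) :
    D ++ U ≠ X ++ Y := by
  intro e
  obtain ⟨A, -, rfl⟩ := SPrime.exists_eq (s := true) (by simpa using hX)
  obtain ⟨B, -, rfl⟩ := SPrime.exists_eq (s := false) (by simpa using hD)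
  simp at e

/-- The words `XY` with `X ∼ U` and `Y ∼ D`. -/
def ProdClass (U D w : Word) : Prop := ∃ X Y : Word, w = X ++ Y ∧ WEquiv X U ∧ WEquiv Y D

/-- A swap of `F` and `G` keeps a word in the class of `UD` as soon as `FG` is not itself a word of
the class. -/
theorem ProdClass.swap {U D F G W₁ W₂ : Word} (hU : SPrime 1 U) (hD : SPrime (-1) D)
    (hF : F ≠ []) (hG : G ≠ []) (bF : ht F = 0) (bG : ht G = 0)
    (hne : ∀ X Y, SPrime 1 X → WEquiv X U → WEquiv Y D → F ++ G ≠ X ++ Y)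
    (h : ProdClass U D (W₁ ++ (F ++ G) ++ W₂)) : ProdClass U D (W₁ ++ (G ++ F) ++ W₂) := by
  obtain ⟨X, Y, e, hXU, hYD⟩ := h
  have hX := SPrime.of_wEquiv hXU hU
  rcases balanced_factor_cases hX (SPrime.of_wEquiv hYD hD) (by simp [bF, bG]) e with
    ⟨Z, rfl, rfl⟩ | ⟨Z, rfl, rfl⟩ | ⟨-, -, e⟩
  · exact ⟨X, Z ++ (G ++ F) ++ W₂, by simp, hXU, (wEquiv_swap hG hF bG bF Z W₂).trans hYD⟩
  · exact ⟨W₁ ++ (G ++ F) ++ Z, Y, by simp, (wEquiv_swap hG hF bG bF W₁ Z).trans hXU, hYD⟩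
  · exact absurd e (hne X Y hX hXU hYD)

/-- for any choice of representatives of the equivalence classes
of upper and lower primes, the set `S'''` is a subset of `S` generating `𝒥`,
and no proper subset of `S'''` generates `𝒥`. -/
theorem stmt15 (rU rD : Word → Word)
    (hrU1 : ∀ U : Word, UpperPrime U → UpperPrime (rU U) ∧ WEquiv (rU U) U)
    (hrU2 : ∀ U U' : Word, UpperPrime U → UpperPrime U' → WEquiv U U' →
      rU U = rU U')
    (hrD1 : ∀ D : Word, LowerPrime D → LowerPrime (rD D) ∧ WEquiv (rD D) D)
    (hrD2 : ∀ D D' : Word, LowerPrime D → LowerPrime D' → WEquiv D D' →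
      rD D = rD D')
    (S3 : Set (FreeAlgebra ℂ Bool))
    (hS3 : S3 = {x | ∃ U D : Word, UpperPrime U ∧ LowerPrime D ∧
      x = toA (rU U) * toA (rD D) - toA (rD D) * toA (rU U)}) :
    S3 ⊆ Sset ∧ TwoSidedIdeal.span S3 = Jideal ∧
      ∀ T : Set (FreeAlgebra ℂ Bool), T ⊂ S3 →
        TwoSidedIdeal.span T ≠ Jideal := by
  simp only [upperPrime_iff, lowerPrime_iff] at hrU1 hrU2 hrD1 hrD2 hS3
  have hsub : S3 ⊆ Sset := by
    rw [hS3]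
    rintro x ⟨U, D, hU, hD, rfl⟩
    have pU := (hrU1 U hU).1
    have pD := (hrD1 D hD).1
    exact ⟨rU U, rD D, pU.1, pD.1, (balanced_iff _).2 pU.2.1, (balanced_iff _).2 pD.2.1, rfl⟩
  refine ⟨hsub, le_antisymm (TwoSidedIdeal.span_mono hsub) ?_, ?_⟩
  · set I := TwoSidedIdeal.span S3 with hI
    let f : Word → I.ringCon.Quotient := fun w => I.ringCon.mk' (toA w)
    have hf : ∀ F G : Word, Commute (f F) (f G) ↔ toA F * toA G - toA G * toA F ∈ I := by
      intro F G
      rw [← TwoSidedIdeal.rel_iff, ← RingCon.eq]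
      exact Iff.rfl
    have main := commute_of_balanced f (by simp [f, toA_nil]) (by simp [f, toA_append]) rU rD
      (fun U hU => (hrU1 U hU).2) (fun D hD => (hrD1 D hD).2) (fun U D hU hD => by
        rw [hf]
        exact TwoSidedIdeal.subset_span (by rw [hS3]; exact ⟨U, D, hU, hD, rfl⟩))
    rw [Jideal, TwoSidedIdeal.span_le]
    rintro x ⟨F, G, -, -, bF, bG, rfl⟩
    exact (hf F G).1 (main _ F G ((balanced_iff F).1 bF) ((balanced_iff G).1 bG) rfl)
  · intro T hT heq
    obtain ⟨x, hxS, hxT⟩ := Set.exists_of_ssubset hT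
    have hxJ : x ∈ TwoSidedIdeal.span T := heq ▸ TwoSidedIdeal.subset_span (hsub hxS)
    rw [hS3] at hxS
    obtain ⟨U₀, D₀, hU₀, hD₀, rfl⟩ := hxS
    obtain ⟨pU, eU⟩ := hrU1 U₀ hU₀
    obtain ⟨pD, eD⟩ := hrD1 D₀ hD₀
    rw [← toA_append, ← toA_append] at hxJ
    have hcon := con_of_mem_span (synCon (ProdClass (rU U₀) (rD D₀))) T ?_ hxJ
    · obtain ⟨X, Y, e, hX, -⟩ :=
        (mem_iff_of_synCon hcon).1 ⟨_, _, rfl, WEquiv.refl _, WEquiv.refl _⟩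
      exact lower_append_ne_upper_append (SPrime.of_wEquiv hX pU) pD e
    · intro y hy
      have hyS := hT.1 hy
      rw [hS3] at hyS
      obtain ⟨U₁, D₁, hU₁, hD₁, rfl⟩ := hyS
      obtain ⟨pU', eU'⟩ := hrU1 U₁ hU₁
      obtain ⟨pD', eD'⟩ := hrD1 D₁ hD₁
      refine ⟨rU U₁ ++ rD D₁, rD D₁ ++ rU U₁, fun W₁ W₂ => ⟨?_, ?_⟩, by simp [toA_append]⟩
      · refine ProdClass.swap pU pD pU'.1 pD'.1 pU'.2.1 pD'.2.1 ?_
        intro X Y hX hXU hYD e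
        -- Equivalent representatives coincide, so this generator would be the omitted one.
        obtain ⟨rfl, rfl⟩ := sPrime_append_inj pU' hX e
        rw [hrU2 U₁ U₀ hU₁ hU₀ (eU'.symm.trans (hXU.trans eU)),
          hrD2 D₁ D₀ hD₁ hD₀ (eD'.symm.trans (hYD.trans eD))] at hy
        exact hxT hy
      · refine ProdClass.swap pU pD pD'.1 pU'.1 pD'.2.1 pU'.2.1 ?_
        intro X Y hX _ _ e
        exact lower_append_ne_upper_append hX pD' e
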